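/- Let X be a compact metric space, E a chained entourage, and c_i : [0,1] → X a sequence of curves of uniformly bounded length converging uniformly to c : [0,1] → X. (1) If all the c_i have the same initial point and the same final point as c, then c_i is E-homotopic to c for all sufficiently large i. (2) If all the curves are closed, then c_i is freely E-homotopic to c for all sufficiently large i. -/

import Mathlib

open Filter Metric Set
open scoped ENNReal NNReal Topology

variable {X : Type*} [MetricSpace X]

/-- The metric entourage of size `ε`: pairs at distance less than `ε`. -/
def MetricEnt (X : Type*) [MetricSpace X] (ε : ℝ) : Set (X × X) :=
  {p | dist p.1 p.2 < ε}

/-- An entourage in a metric space: a symmetric subset of `X × X` containing some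
metric entourage `E_ε`. -/
def IsEntourage (E : Set (X × X)) : Prop :=
  (∀ p : X × X, p ∈ E → (p.2, p.1) ∈ E) ∧ ∃ ε > 0, MetricEnt X ε ⊆ E

/-- The `E`-ball about `x`: `B(x,E) = {y | (x,y) ∈ E}`. -/
def EBall (E : Set (X × X)) (x : X) : Set X := {y | (x, y) ∈ E}

/-- An `E`-chain: a nonempty finite sequence of points with all consecutive pairs in `E`. -/
def IsEChain (E : Set (X × X)) (l : List X) : Prop :=
  l ≠ [] ∧ l.Chain' (fun a b => (a, b) ∈ E)

/-- Concatenation of two chains sharing an endpoint (the last point of `α` should be the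
first point of `β`). -/
def chainConc (α β : List X) : List X := α ++ β.tail

/-- The length `L(α)` of a chain: the sum of the distances between consecutive points. -/
noncomputable def chainLength : List X → ℝ
  | [] => 0
  | [_] => 0
  | a :: b :: rest => dist a b + chainLength (b :: rest)

/-- A basic move of an `E`-homotopy: inserting a point between two consecutive points
(legal when both new pairs lie in `E`), or removing an interior point (legal when the
resulting consecutive pair lies in `E`).  Endpoints are never changed. -/
inductive EStep (E : Set (X × X)) : List X → List X → Prop
  | insert (pre : List X) (a x b : X) (post : List X)
      (h1 : (a, x) ∈ E) (h2 : (x, b) ∈ E) :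
      EStep E (pre ++ a :: b :: post) (pre ++ a :: x :: b :: post)
  | remove (pre : List X) (a x b : X) (post : List X)
      (h : (a, b) ∈ E) :
      EStep E (pre ++ a :: x :: b :: post) (pre ++ a :: b :: post)

/-- Two chains are `E`-homotopic if one passes from one to the other by finitely many
basic moves. -/
def EHomotopic (E : Set (X × X)) : List X → List X → Prop :=
  Relation.ReflTransGen (EStep E)

/-- Two `E`-loops `l₁`, `l₂` are freely `E`-homotopic if there are `E`-chains `α`, `β`
from a common point to their respective basepoints such that the corresponding
conjugated loops are `E`-homotopic. -/
def FreelyEHomotopic (E : Set (X × X)) (l₁ l₂ : List X) : Prop :=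
  ∃ α β : List X, IsEChain E α ∧ IsEChain E β ∧ α.head? = β.head? ∧
    α.getLast? = l₁.head? ∧ β.getLast? = l₂.head? ∧
    EHomotopic E (chainConc (chainConc α l₁) α.reverse)
      (chainConc (chainConc β l₂) β.reverse)

/-- A subset `A` is chain connected if for every `δ > 0` any two points of `A` are joined
by a `δ`-chain lying in `A`. -/
def ChainConnected (A : Set X) : Prop :=
  ∀ δ > 0, ∀ x ∈ A, ∀ y ∈ A, ∃ l : List X, IsEChain (MetricEnt X δ) l ∧
    (∀ z ∈ l, z ∈ A) ∧ l.head? = some x ∧ l.getLast? = some y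

/-- A chained entourage: an entourage contained in the closure of its interior, this
closure being compact if the space is not, such that any pair `(x,y) ∈ E` may be joined
by arbitrarily fine chains inside `B(x,E) ∩ B(y,E)`. -/
def IsChained (E : Set (X × X)) : Prop :=
  IsEntourage E ∧ E ⊆ closure (interior E) ∧
  (¬ CompactSpace X → IsCompact (closure (interior E))) ∧
  ∀ p ∈ E, ∀ δ > 0, ∃ l : List X, IsEChain (MetricEnt X δ) l ∧
    l.head? = some p.1 ∧ l.getLast? = some p.2 ∧
    ∀ z ∈ l, z ∈ EBall E p.1 ∩ EBall E p.2

/-- An `F`-refinement of a `D`-chain: between each pair of consecutive points `x`, `y` of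
the original chain insert an `F`-chain from `x` to `y` lying in `B(x,D) ∩ B(y,D)`. -/
inductive IsRefinement (D F : Set (X × X)) : List X → List X → Prop
  | single (x : X) : IsRefinement D F [x] [x]
  | cons (x y : X) (seg rest refRest : List X)
      (hseg : IsEChain F (x :: (seg ++ [y])))
      (hin : ∀ z ∈ x :: (seg ++ [y]), z ∈ EBall D x ∩ EBall D y)
      (hrest : IsRefinement D F (y :: rest) refRest) :
      IsRefinement D F (x :: y :: rest) (x :: (seg ++ refRest))

/-- An `E`-subdivision of a curve `c` (regarded on `[0,1]`): an `E`-chain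
`{c(t₀),…,c(tₙ)}` with `0 = t₀ ≤ ⋯ ≤ tₙ = 1` such that the restriction of `c` to each
`[tᵢ,tᵢ₊₁]` lies in `B(c(tᵢ),E) ∩ B(c(tᵢ₊₁),E)`. -/
def IsSubdivision (E : Set (X × X)) (c : ℝ → X) (l : List X) : Prop :=
  ∃ ts : List ℝ, ts.head? = some 0 ∧ ts.getLast? = some 1 ∧
    l = ts.map c ∧ IsEChain E l ∧
    ts.Chain' (fun a b => a ≤ b ∧ ∀ s, a ≤ s → s ≤ b →
      c s ∈ EBall E (c a) ∩ EBall E (c b))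

/-- `c` is a stringing of the chain `l` iff `c` is a curve on `[0,1]` of which `l` is an
`E`-subdivision. -/
def IsStringing (E : Set (X × X)) (l : List X) (c : ℝ → X) : Prop :=
  ContinuousOn c (Set.Icc 0 1) ∧ IsSubdivision E c l

/-- Two curves with the same endpoints are `E`-homotopic if they admit `E`-homotopic
`E`-subdivisions. -/
def CurveEHomotopic (E : Set (X × X)) (c₁ c₂ : ℝ → X) : Prop :=
  ∃ l₁ l₂ : List X, IsSubdivision E c₁ l₁ ∧ IsSubdivision E c₂ l₂ ∧ EHomotopic E l₁ l₂

/-- Two closed curves are freely `E`-homotopic if they admit freely `E`-homotopic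
`E`-subdivisions. -/
def CurveFreelyEHomotopic (E : Set (X × X)) (c₁ c₂ : ℝ → X) : Prop :=
  ∃ l₁ l₂ : List X, IsSubdivision E c₁ l₁ ∧ IsSubdivision E c₂ l₂ ∧ FreelyEHomotopic E l₁ l₂

/-- A `D`-small loop: a `D`-loop of the form `γ * τ * γ̄` where `τ` is a `D`-loop with
exactly three edges. -/
def IsSmallLoop (D : Set (X × X)) (l : List X) : Prop :=
  ∃ (γ : List X) (a b c : X), IsEChain D γ ∧ γ.getLast? = some a ∧
    (a, b) ∈ D ∧ (b, c) ∈ D ∧ (c, a) ∈ D ∧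
    l = chainConc (chainConc γ [a, b, c, a]) γ.reverse

/-- `C(X,ε)`: the minimal number of open `ε`-balls needed to cover `X`. -/
noncomputable def coveringNumber (X : Type*) [MetricSpace X] (ε : ℝ) : ℕ :=
  sInf {n : ℕ | ∃ s : Finset X, s.card = n ∧ (⋃ x ∈ s, Metric.ball x ε) = Set.univ}

/-- A geodesic space: any two points are joined by a curve whose length (total
variation) equals the distance between them. -/
def IsGeodesicSpace (X : Type*) [MetricSpace X] : Prop :=
  ∀ x y : X, ∃ f : ℝ → X, ContinuousOn f (Set.Icc 0 1) ∧ f 0 = x ∧ f 1 = y ∧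
    eVariationOn f (Set.Icc 0 1) = ENNReal.ofReal (dist x y)

/-- Fixed-endpoint path homotopy of two curves on `[0,1]`. -/
def PathHomotopicOn (f g : ℝ → X) : Prop :=
  ∃ H : ℝ × ℝ → X, ContinuousOn H (Set.Icc 0 1 ×ˢ Set.Icc 0 1) ∧
    (∀ t ∈ Set.Icc (0:ℝ) 1, H (0, t) = f t ∧ H (1, t) = g t) ∧
    (∀ s ∈ Set.Icc (0:ℝ) 1, H (s, 0) = f 0 ∧ H (s, 1) = f 1)

/-- Concatenation of a list of chains (each sharing its endpoint with the next). -/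
def concList : List (List X) → List X
  | [] => []
  | [l] => l
  | l :: l' :: ls => chainConc l (concList (l' :: ls))

/-- Concatenation of two curves on `[0,1]`. -/
noncomputable def concat2 (f g : ℝ → X) : ℝ → X :=
  fun t => if t ≤ 1 / 2 then f (2 * t) else g (2 * t - 1)

/-- Concatenation of a finite list of loops based at `p`. -/
noncomputable def concatLoops (p : X) : List (ℝ → X) → ℝ → X
  | [] => fun _ => p
  | [f] => f
  | f :: g :: fs => concat2 f (concatLoops p (g :: fs))

/-- A curve on `[0,1]` is parameterized proportional to arclength. -/
def PropToArclength (c : ℝ → X) : Prop :=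
  ∀ t ∈ Set.Icc (0:ℝ) 1, eVariationOn c (Set.Icc 0 t) =
    ENNReal.ofReal t * eVariationOn c (Set.Icc 0 1)

/-- A closed curve (parameterized on `[0,1]` proportional to arclength) is a closed
`κ`-geodesic if every subarc of its periodic extension of length at most `κ` has length
equal to the distance between its endpoints. -/
def IsClosedKGeodesic (c : ℝ → X) (κ : ℝ) : Prop :=
  c 0 = c 1 ∧
  ∀ s t : ℝ, s ≤ t →
    eVariationOn (fun u => c (Int.fract u)) (Set.Icc s t) ≤ ENNReal.ofReal κ →
    eVariationOn (fun u => c (Int.fract u)) (Set.Icc s t) =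
      ENNReal.ofReal (dist (c (Int.fract s)) (c (Int.fract t)))

/-!
A curve `f` that stays uniformly close to a continuous curve `c` cannot oscillate more than `c` on
short intervals. Hence one partition of `[0,1]` is fine for all curves near `c` at once: on each of
its intervals the values of any two such curves `f`, `g` are `E`-related. Along this partition the
two subdivisions form the rails of a ladder whose rungs, diagonals and rails lie in `E`, and pushing
the last rung down the ladder one square at a time is an `E`-homotopy between the two ways around
it. Both claims are this homotopy, with the two end rungs either degenerate or equal.
-/

open scoped Uniformity

section Ladder

variable {Y : Type*} {E : Set (Y × Y)}

theorem EHomotopic.cons {l m : List Y} (x : Y) (h : EHomotopic E l m) :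
    EHomotopic E (x :: l) (x :: m) := by
  refine Relation.ReflTransGen.lift (x :: ·) (fun l m hstep => ?_) _ _ h
  cases hstep with
  | insert pre a y b post hay hyb => exact .insert (x :: pre) a y b post hay hyb
  | remove pre a y b post hab => exact .remove (x :: pre) a y b post hab

theorem EHomotopic.ladder {ι : Type*} {f g : ι → Y} {a z : ι} {ts : List ι}
    (hlast : (a :: ts).getLast? = some z)
    (hchain : (a :: ts).IsChain fun s t => (f s, g s) ∈ E ∧ (g s, f t) ∈ E ∧ (g s, g t) ∈ E) :
    EHomotopic E ((a :: ts).map f ++ [g z]) (f a :: (a :: ts).map g) := by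
  induction ts generalizing a with
  | nil =>
    obtain rfl : a = z := by simpa using hlast
    exact .refl
  | cons b ts ih =>
    obtain ⟨⟨rung, diagonal, rail⟩, htail⟩ := List.isChain_cons_cons.1 hchain
    have slide : EHomotopic E (f a :: ((b :: ts).map f ++ [g z]))
        (f a :: f b :: (b :: ts).map g) :=
      (ih (by simpa using hlast) htail).cons (f a)
    have insert_rung : EStep E (f a :: f b :: (b :: ts).map g)
        (f a :: g a :: f b :: (b :: ts).map g) :=
      .insert [] _ _ _ _ rung diagonal
    have remove_diagonal : EStep E (f a :: g a :: f b :: (b :: ts).map g)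
        (f a :: (a :: b :: ts).map g) :=
      .remove [f a] _ _ _ _ rail
    exact (slide.tail insert_rung).tail remove_diagonal

end Ladder

section Subdivision

variable {Y : Type*} {E : Set (Y × Y)} {c : ℝ → Y} {l : List Y}

theorem IsSubdivision.repeat_start (h : IsSubdivision E c l) (h0 : (c 0, c 0) ∈ E) :
    IsSubdivision E c (c 0 :: l) := by
  obtain ⟨ts, hhead, hlast, rfl, hE, hts⟩ := h
  obtain ⟨ts, rfl⟩ := List.head?_eq_some_iff.1 hhead
  refine ⟨0 :: 0 :: ts, rfl, by simpa using hlast, rfl, ⟨List.cons_ne_nil _ _, ?_⟩, ?_⟩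
  · exact List.isChain_cons_cons.2 ⟨h0, hE.2⟩
  · refine List.isChain_cons_cons.2 ⟨⟨le_rfl, fun s hs hs' => ?_⟩, hts⟩
    obtain rfl := le_antisymm hs' hs
    exact ⟨h0, h0⟩

theorem IsSubdivision.repeat_end (h : IsSubdivision E c l) (h1 : (c 1, c 1) ∈ E) :
    IsSubdivision E c (l ++ [c 1]) := by
  obtain ⟨ts, hhead, hlast, rfl, hE, hts⟩ := h
  refine ⟨ts ++ [1], by simp [hhead], by simp, by simp, ⟨by simp, ?_⟩, ?_⟩
  · exact hE.2.append (.singleton _) (by simpa [hlast] using h1)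
  · refine hts.append (.singleton _) ?_
    simp only [hlast, Option.mem_def, Option.some.injEq, List.head?_cons, forall_eq']
    refine ⟨le_rfl, fun s hs hs' => ?_⟩
    obtain rfl := le_antisymm hs' hs
    exact ⟨h1, h1⟩

end Subdivision

theorem forall_mem_of_isChain_and {α : Type*} {P : α → Prop} {l : List α} (hl : 2 ≤ l.length)
    (h : l.IsChain fun a b => P a ∧ P b) : ∀ a ∈ l, P a := by
  rw [List.isChain_iff_getElem] at h
  rw [List.forall_mem_iff_getElem]
  rintro (_ | k) hk
  · exact (h 0 hl).1
  · exact (h k hk).2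

/-- A partition `0 = t₀ ≤ ⋯ ≤ tₙ = 1` that is fine for a family `𝓕` of curves simultaneously: on
each interval `[tᵢ, tᵢ₊₁]` any values of any two members of `𝓕` are `V`-related. -/
structure IsFinePartition {Y : Type*} (V : Set (Y × Y)) (𝓕 : Set (ℝ → Y)) (ts : List ℝ) :
    Prop where
  head : ts.head? = some 0
  last : ts.getLast? = some 1
  isChain : ts.IsChain fun a b =>
    a ≤ b ∧ ∀ f ∈ 𝓕, ∀ g ∈ 𝓕, ∀ s ∈ Icc a b, ∀ t ∈ Icc a b, (f s, g t) ∈ V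

theorem exists_isFinePartition_of_continuousOn {Y : Type*} [UniformSpace Y] {c : ℝ → Y}
    (hc : ContinuousOn c (Icc 0 1)) {V : Set (Y × Y)} (hV : V ∈ 𝓤 Y) :
    ∃ W ∈ 𝓤 Y, ∃ ts, IsFinePartition V {f | ∀ t ∈ Icc (0 : ℝ) 1, (c t, f t) ∈ W} ts := by
  obtain ⟨U, hU, hUV⟩ :=
    (eventually_uniformity_iterate_comp_subset hV 3).exists_mem_of_smallSets
  obtain ⟨W, ⟨hW, hWopen, hWsymm⟩, hWU⟩ := uniformity_hasBasis_open_symmetric.mem_iff.1 hU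
  have comp_mem {x₀ x₁ x₂ x₃ x₄ : Y} (h₁ : (x₀, x₁) ∈ W) (h₂ : (x₁, x₂) ∈ W)
      (h₃ : (x₂, x₃) ∈ W) (h₄ : (x₃, x₄) ∈ W) : (x₀, x₄) ∈ V :=
    hUV ⟨x₁, hWU h₁, x₂, hWU h₂, x₃, hWU h₃, hWU h₄⟩
  have symm {x y : Y} (h : (x, y) ∈ W) : (y, x) ∈ W := hWsymm.symm _ _ h
  obtain ⟨τ, hτ0, hτmono, ⟨n, hn⟩, hτ⟩ := exists_monotone_Icc_subset_open_cover_Icc zero_le_one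
    (c := fun x : Icc (0 : ℝ) 1 => {t | (c x, c t) ∈ W})
    (fun x => (UniformSpace.isOpen_ball (c x) hWopen).preimage hc.domRestrict)
    (fun x _ => mem_iUnion.2 ⟨x, refl_mem_uniformity hW⟩)
  refine ⟨W, hW, (List.range (n + 1)).map fun k => (τ k : ℝ), ?_, ?_, ?_⟩
  · simp [List.range_succ_eq_map, hτ0]
  · simp [List.range_succ, hn]
  refine (List.isChain_map _).2 ((List.isChain_range_succ _ n).2 fun k _ => ⟨hτmono k.le_succ, ?_⟩)
  intro f hf g hg s hs t ht
  obtain ⟨x, hx⟩ := hτ k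
  have mem_Icc {r : ℝ} (hr : r ∈ Icc (τ k : ℝ) (τ (k + 1))) : r ∈ Icc (0 : ℝ) 1 :=
    ⟨(τ k).2.1.trans hr.1, hr.2.trans (τ (k + 1)).2.2⟩
  have near_centre {r : ℝ} (hr : r ∈ Icc (τ k : ℝ) (τ (k + 1))) : (c x, c r) ∈ W :=
    hx (show (⟨r, mem_Icc hr⟩ : Icc (0 : ℝ) 1) ∈ Icc (τ k) (τ (k + 1)) from hr)
  exact comp_mem (symm (hf s (mem_Icc hs))) (symm (near_centre hs)) (near_centre ht)
    (hg t (mem_Icc ht))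

namespace IsFinePartition

variable {Y : Type*} {E : Set (Y × Y)} {𝓕 : Set (ℝ → Y)} {ts : List ℝ} {f g : ℝ → Y}

theorem mem_of_mem (h : IsFinePartition E 𝓕 ts) (hf : f ∈ 𝓕) (hg : g ∈ 𝓕) {t : ℝ} (ht : t ∈ ts) :
    (f t, g t) ∈ E := by
  have hlength : 2 ≤ ts.length := by
    rcases ts with _ | ⟨a, _ | ⟨b, ts⟩⟩
    · simpa using h.head
    · have h0 : a = 0 := by simpa using h.head
      have h1 : a = 1 := by simpa using h.last
      exact absurd (h0.symm.trans h1) zero_ne_one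
    · simp
  have hboth : ts.IsChain fun a b => (f a, g a) ∈ E ∧ (f b, g b) ∈ E :=
    h.isChain.imp fun a b ⟨hab, hE⟩ =>
      have ha := left_mem_Icc.2 hab
      have hb := right_mem_Icc.2 hab
      ⟨hE f hf g hg a ha a ha, hE f hf g hg b hb b hb⟩
  exact forall_mem_of_isChain_and hlength hboth t ht

theorem isSubdivision (h : IsFinePartition E 𝓕 ts) (hf : f ∈ 𝓕) :
    IsSubdivision E f (ts.map f) := by
  refine ⟨ts, h.head, h.last, rfl, ⟨?_, ?_⟩, h.isChain.imp fun a b ⟨hab, hE⟩ => ⟨hab, ?_⟩⟩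
  · intro hnil
    simpa [List.map_eq_nil_iff.1 hnil] using h.head
  · exact (List.isChain_map f).2 <| h.isChain.imp fun a b ⟨hab, hE⟩ =>
      hE f hf f hf a (left_mem_Icc.2 hab) b (right_mem_Icc.2 hab)
  · exact fun s has hsb => ⟨hE f hf f hf a (left_mem_Icc.2 hab) s ⟨has, hsb⟩,
      hE f hf f hf b (right_mem_Icc.2 hab) s ⟨has, hsb⟩⟩

theorem eHomotopic_map (h : IsFinePartition E 𝓕 ts) (hf : f ∈ 𝓕) (hg : g ∈ 𝓕) :
    EHomotopic E (ts.map f ++ [g 1]) (f 0 :: ts.map g) := by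
  obtain ⟨ts, rfl⟩ := List.head?_eq_some_iff.1 h.head
  refine .ladder h.last (h.isChain.imp fun a b ⟨hab, hE⟩ => ?_)
  have ha := left_mem_Icc.2 hab
  have hb := right_mem_Icc.2 hab
  exact ⟨hE f hf g hg a ha a ha, hE g hg f hf a ha b hb, hE g hg g hg a ha b hb⟩

-- The ladder has one vertex too many on each side; both are absorbed by repeating an endpoint in
-- the subdivisions.
theorem curveEHomotopic (h : IsFinePartition E 𝓕 ts) (hf : f ∈ 𝓕) (hg : g ∈ 𝓕)
    (h0 : f 0 = g 0) (h1 : f 1 = g 1) : CurveEHomotopic E f g := by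
  have hf1 : (f 1, f 1) ∈ E := h.mem_of_mem hf hf (List.mem_of_getLast? h.last)
  have hg0 : (g 0, g 0) ∈ E := h.mem_of_mem hg hg (List.mem_of_head? h.head)
  refine ⟨_, _, (h.isSubdivision hf).repeat_end hf1, (h.isSubdivision hg).repeat_start hg0, ?_⟩
  simpa only [h0, h1] using h.eHomotopic_map hf hg

theorem curveFreelyEHomotopic (h : IsFinePartition E 𝓕 ts) (hf : f ∈ 𝓕) (hg : g ∈ 𝓕)
    (hclosed : g 0 = g 1) : CurveFreelyEHomotopic E f g := by
  have hzero : (0 : ℝ) ∈ ts := List.mem_of_head? h.head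
  have hgf : (g 0, f 0) ∈ E := h.mem_of_mem hg hf hzero
  have hgg : (g 0, g 0) ∈ E := h.mem_of_mem hg hg hzero
  refine ⟨ts.map f, g 0 :: ts.map g, h.isSubdivision hf, (h.isSubdivision hg).repeat_start hgg,
    [g 0, f 0], [g 0], ⟨by simp, List.isChain_pair.2 hgf⟩, ⟨by simp, .singleton _⟩, rfl,
    by simp [h.head], rfl, ?_⟩
  have slide : EHomotopic E (g 0 :: (ts.map f ++ [g 0])) (g 0 :: f 0 :: ts.map g) := by
    simpa only [← hclosed] using (h.eHomotopic_map hf hg).cons (g 0)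
  obtain ⟨ts, rfl⟩ := List.head?_eq_some_iff.1 h.head
  have remove_rung : EStep E (g 0 :: f 0 :: (0 :: ts).map g) (g 0 :: (0 :: ts).map g) :=
    .remove [] _ _ _ _ hgg
  simpa [chainConc, EHomotopic] using slide.tail remove_rung

end IsFinePartition

theorem uniform_convergence_ehomotopic_general {ι : Type*} {Y : Type*} [UniformSpace Y]
    [T0Space Y] {p : Filter ι} {E : Set (Y × Y)} (hE : E ∈ 𝓤 Y) {c : ι → ℝ → Y} {clim : ℝ → Y}
    (hclim : ContinuousOn clim (Icc 0 1)) (hconv : TendstoUniformlyOn c clim p (Icc 0 1)) :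
    ((∀ᶠ i in p, c i 0 = clim 0 ∧ c i 1 = clim 1) → ∀ᶠ i in p, CurveEHomotopic E (c i) clim) ∧
    ((∀ᶠ i in p, c i 0 = c i 1) → ∀ᶠ i in p, CurveFreelyEHomotopic E (c i) clim) := by
  obtain ⟨W, hW, ts, hts⟩ := exists_isFinePartition_of_continuousOn hclim hE
  have hnear := hconv W hW
  have hself : ∀ t ∈ Icc (0 : ℝ) 1, (clim t, clim t) ∈ W := fun _ _ => refl_mem_uniformity hW
  constructor
  · intro hends
    filter_upwards [hnear, hends] with i hi hendsi
    exact hts.curveEHomotopic hi hself hendsi.1 hendsi.2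
  · intro hclosed
    obtain rfl | _ := p.eq_or_neBot
    · exact eventually_bot
    have hlim : clim 0 = clim 1 := tendsto_nhds_unique_of_eventuallyEq
      (hconv.tendsto_at (left_mem_Icc.2 zero_le_one))
      (hconv.tendsto_at (right_mem_Icc.2 zero_le_one)) hclosed
    filter_upwards [hnear] with i hi
    exact hts.curveFreelyEHomotopic hi hself hlim

theorem IsEntourage.mem_uniformity {E : Set (X × X)} (hE : IsEntourage E) : E ∈ 𝓤 X := by
  obtain ⟨-, ε, hε, hεE⟩ := hE
  exact Metric.mem_uniformity_dist.2 ⟨ε, hε, fun _ _ hxy => hεE hxy⟩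

/-- in a compact metric space with chained entourage `E`, if curves `cᵢ` of
uniformly bounded length converge uniformly to `c`, then (1) with fixed endpoints, `cᵢ`
is `E`-homotopic to `c` for large `i`; (2) if all curves are closed, `cᵢ` is freely
`E`-homotopic to `c` for large `i`. -/
theorem uniform_convergence_ehomotopic [CompactSpace X] (E : Set (X × X))
    (hE : IsChained E) (c : ℕ → ℝ → X) (clim : ℝ → X)
    (hcont : ∀ i, ContinuousOn (c i) (Set.Icc 0 1))
    (hclim : ContinuousOn clim (Set.Icc 0 1))
    (hlen : ∃ L : ℝ, ∀ i, eVariationOn (c i) (Set.Icc 0 1) ≤ ENNReal.ofReal L)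
    (hconv : TendstoUniformlyOn c clim atTop (Set.Icc 0 1)) :
    ((∀ i, c i 0 = clim 0 ∧ c i 1 = clim 1) →
      ∀ᶠ i in atTop, CurveEHomotopic E (c i) clim) ∧
    (((∀ i, c i 0 = c i 1) ∧ clim 0 = clim 1) →
      ∀ᶠ i in atTop, CurveFreelyEHomotopic E (c i) clim) := by
  have h := uniform_convergence_ehomotopic_general hE.1.mem_uniformity hclim hconv
  exact ⟨fun hends => h.1 (.of_forall hends), fun hclosed => h.2 (.of_forall hclosed.1)⟩
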